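/- (Estimate 3, right extreme subdomain.) Let ε ∈ C^∞(cl(Ω_I × (0,T))) satisfy: 𝒫_p ε = 0 in Ω_I × (0,T); ε = 0 on (∂D × [a_I,b_I]) × [0,T]; ε(·,·,0) = 0 on Ω_I; and ε(·,b_I,·) = 0 on D × (0,T). Set ν = ∂_{x_n}ε. Let φ be a strictly positive C^2 function with φ'/φ and φ''/φ bounded such that 4p + 2 b_n(t)/a_{n,n}(t) + φ'(b_I)/φ(b_I) < 0 for all t ∈ [0,T], and let ϕ be a strictly positive C^1 function on [0,T] with ϕ'(t)/ϕ(t) ≤ −Γ for all t, where Γ = sup_t|a_{n,n}| · sup|φ''/φ| + 2 sup_t|a_{n,n}| · (sup|φ'/φ|)² + 2 sup_t|c − p b_n − p² a_{n,n}| + sup_t|2p a_{n,n}+b_n| · sup|φ'/φ|. Then for every (X, x_n, t) ∈ cl(D) × [a_I,b_I] × [0,T]: ν(X,x_n,t)² φ(x_n) ϕ(t) ≤ sup_{cl(D)×[0,T]} ν(·,a_I,·)² φ(a_I) ϕ(·). -/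

import Mathlib

open Set Filter

/-- Spatial partial derivative `∂u/∂xᵢ` of a function `u : ℝⁿ → ℝ`. -/
noncomputable def pd1 {m : ℕ} (i : Fin m) (u : (Fin m → ℝ) → ℝ) (x : Fin m → ℝ) : ℝ :=
  fderiv ℝ u x (Pi.single i 1)

/-- Second spatial partial derivative `∂²u/∂xᵢ∂xⱼ`. -/
noncomputable def pd2 {m : ℕ} (i j : Fin m) (u : (Fin m → ℝ) → ℝ) (x : Fin m → ℝ) : ℝ :=
  pd1 i (fun y => pd1 j u y) x

/-- The parabolic operator
`𝒫u = ∂ₜu − Σᵢⱼ aᵢⱼ(t) ∂ᵢ∂ⱼu + Σᵢ bᵢ(t) ∂ᵢu + c(t) u`. -/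
noncomputable def parabolicOp {m : ℕ} (a : Fin m → Fin m → ℝ → ℝ) (b : Fin m → ℝ → ℝ)
    (c : ℝ → ℝ) (u : (Fin m → ℝ) → ℝ → ℝ) (x : Fin m → ℝ) (t : ℝ) : ℝ :=
  deriv (fun s => u x s) t
    - ∑ i, ∑ j, a i j t * pd2 i j (fun y => u y t) x
    + ∑ i, b i t * pd1 i (fun y => u y t) x
    + c t * u x t

/-- The transformed operator `𝒫ₚε = ∂ₜε − Σᵢⱼ aᵢⱼ ∂ᵢ∂ⱼε
+ Σ_{i<n} (2p aᵢₙ + bᵢ) ∂ᵢε + (2p aₙₙ + bₙ) ∂ₙε + (c − p bₙ − p² aₙₙ) ε`,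
in dimension `n+1`, the last coordinate playing the role of `xₙ`. -/
noncomputable def transOp {n : ℕ} (p : ℝ) (a : Fin (n+1) → Fin (n+1) → ℝ → ℝ)
    (b : Fin (n+1) → ℝ → ℝ) (c : ℝ → ℝ)
    (ε : (Fin (n+1) → ℝ) → ℝ → ℝ) (x : Fin (n+1) → ℝ) (t : ℝ) : ℝ :=
  deriv (fun s => ε x s) t
    - ∑ i, ∑ j, a i j t * pd2 i j (fun y => ε y t) x
    + ∑ i ∈ Finset.univ.erase (Fin.last n),
        (2 * p * a i (Fin.last n) t + b i t) * pd1 i (fun y => ε y t) x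
    + (2 * p * a (Fin.last n) (Fin.last n) t + b (Fin.last n) t) *
        pd1 (Fin.last n) (fun y => ε y t) x
    + (c t - p * b (Fin.last n) t - p ^ 2 * a (Fin.last n) (Fin.last n) t) * ε x t


open scoped Topology ContDiff

/-- The derivative of `f` at `q` within `S` in the direction `v`. -/
noncomputable def dirDeriv {V : Type*} [NormedAddCommGroup V] [NormedSpace ℝ V]
    (S : Set V) (v : V) (f : V → ℝ) (q : V) : ℝ :=
  fderivWithin ℝ f S q v

section DirDeriv

variable {V : Type*} [NormedAddCommGroup V] [NormedSpace ℝ V] {S : Set V} {f : V → ℝ}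

lemma hasDerivWithinAt_line {L : V →L[ℝ] ℝ} {q v : V} {J : Set ℝ} {r : ℝ}
    (h : HasFDerivWithinAt f L S (q + r • v)) (hJ : ∀ s ∈ J, q + s • v ∈ S) :
    HasDerivWithinAt (fun s : ℝ => f (q + s • v)) (L v) J r := by
  have hl : HasDerivWithinAt (fun s : ℝ => q + s • v) v J r := by
    simpa using (((hasDerivAt_id r).smul_const v).const_add q).hasDerivWithinAt
  exact h.comp_hasDerivWithinAt r hl hJ

lemma hasDerivAt_line {L : V →L[ℝ] ℝ} {q v : V} {r : ℝ}
    (h : HasFDerivWithinAt f L S (q + r • v)) (hS : S ∈ 𝓝 (q + r • v)) :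
    HasDerivAt (fun s : ℝ => f (q + s • v)) (L v) r := by
  have hl : HasDerivAt (fun s : ℝ => q + s • v) v r := by
    simpa using ((hasDerivAt_id r).smul_const v).const_add q
  exact (h.hasFDerivAt hS).comp_hasDerivAt r hl

lemma ContDiffOn.dirDeriv (hf : ContDiffOn ℝ ∞ f S) (hS : UniqueDiffOn ℝ S) (v : V) :
    ContDiffOn ℝ ∞ (dirDeriv S v f) S :=
  (hf.fderivWithin hS (by simp)).clm_apply contDiffOn_const

lemma ContDiffOn.hasFDerivWithinAt_top (hf : ContDiffOn ℝ ∞ f S) {q : V} (hq : q ∈ S) :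
    HasFDerivWithinAt f (fderivWithin ℝ f S q) S q :=
  ((hf q hq).differentiableWithinAt (by simp)).hasFDerivWithinAt

lemma dirDeriv_dirDeriv (hf : ContDiffOn ℝ ∞ f S) (hS : UniqueDiffOn ℝ S) (u v : V)
    {q : V} (hq : q ∈ S) :
    dirDeriv S u (dirDeriv S v f) q = fderivWithin ℝ (fderivWithin ℝ f S) S q u v := by
  have h : DifferentiableWithinAt ℝ (fderivWithin ℝ f S) S q :=
    ((hf.fderivWithin (m := ∞) hS (by simp)) q hq).differentiableWithinAt (by simp)
  have h1 := h.hasFDerivWithinAt.clm_apply (hasFDerivWithinAt_const v q S)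
  have h2 := h1.fderivWithin (hS q hq)
  unfold dirDeriv
  rw [h2]
  simp

lemma dirDeriv_comm (hf : ContDiffOn ℝ ∞ f S) (hS : UniqueDiffOn ℝ S)
    (hcl : S ⊆ closure (interior S)) (u v : V) {q : V} (hq : q ∈ S) :
    dirDeriv S u (dirDeriv S v f) q = dirDeriv S v (dirDeriv S u f) q := by
  rw [dirDeriv_dirDeriv hf hS u v hq, dirDeriv_dirDeriv hf hS v u hq]
  exact ((hf q hq).isSymmSndFDerivWithinAt (by
    rw [minSmoothness_of_isRCLikeNormedField]
    exact ENat.LEInfty.out) hS (hcl hq) hq) u v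

lemma dirDeriv_congr {g : V → ℝ} (h : EqOn f g S) {q : V} (hq : q ∈ S) (v : V) :
    dirDeriv S v f q = dirDeriv S v g q := by
  unfold dirDeriv
  rw [fderivWithin_congr h (h hq)]

lemma dirDeriv_sum_smul {ι : Type*} (s : Finset ι) (e : ι → V) (r : ι → ℝ) (q : V) :
    dirDeriv S (∑ i ∈ s, r i • e i) f q = ∑ i ∈ s, r i * dirDeriv S (e i) f q := by
  simp [dirDeriv]

/-- If `f` vanishes along a line through `q`, its derivative in that direction vanishes. -/
lemma dirDeriv_eq_zero_of_line (hf : ContDiffOn ℝ ∞ f S) {q v : V} (hq : q ∈ S)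
    (hS : ∀ᶠ s : ℝ in 𝓝 0, q + s • v ∈ S) (h0 : ∀ᶠ s : ℝ in 𝓝 0, f (q + s • v) = 0) :
    dirDeriv S v f q = 0 := by
  have h1 := hasDerivWithinAt_line (r := 0) (v := v) (q := q) (J := {s : ℝ | q + s • v ∈ S})
    (L := fderivWithin ℝ f S q)
    (S := S) (by simpa using hf.hasFDerivWithinAt_top hq) (fun s hs => hs)
  have h2 := h1.hasDerivAt (show {s : ℝ | q + s • v ∈ S} ∈ 𝓝 0 from hS)
  have h3 : HasDerivAt (fun s : ℝ => f (q + s • v)) 0 0 :=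
    (hasDerivAt_const (0 : ℝ) (0 : ℝ)).congr_of_eventuallyEq h0
  exact h2.unique h3

end DirDeriv

section OneDim

lemma deriv_nonneg_of_left_max {g : ℝ → ℝ} {g' : ℝ} (h : HasDerivWithinAt g g' (Iic 0) 0)
    (hm : ∀ᶠ s in 𝓝[≤] (0 : ℝ), g s ≤ g 0) : 0 ≤ g' := by
  have h1 : HasDerivWithinAt g g' (Iio 0) 0 := h.mono Iio_subset_Iic_self
  rw [hasDerivWithinAt_iff_tendsto_slope' (by simp)] at h1
  refine ge_of_tendsto h1 ?_
  filter_upwards [hm.filter_mono (nhdsWithin_mono _ Iio_subset_Iic_self), self_mem_nhdsWithin]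
    with s hs hs0
  rw [slope_def_field]
  exact div_nonneg_of_nonpos (by linarith) (by simpa using le_of_lt hs0)

lemma second_deriv_nonpos_of_max {g g1 : ℝ → ℝ} {g2 : ℝ}
    (h1 : ∀ᶠ s in 𝓝 (0 : ℝ), HasDerivAt g (g1 s) s) (h2 : HasDerivAt g1 g2 0)
    (hm : ∀ᶠ s in 𝓝 (0 : ℝ), g s ≤ g 0) : g1 0 = 0 ∧ g2 ≤ 0 := by
  have hmax : IsLocalMax g 0 := hm
  have h10 : g1 0 = 0 := hmax.hasDerivAt_eq_zero h1.self_of_nhds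
  refine ⟨h10, ?_⟩
  by_contra! hpos
  have hd : deriv g =ᶠ[𝓝 0] g1 := h1.mono fun s hs => hs.deriv
  have hdd : deriv (deriv g) 0 = g2 := by rw [hd.deriv_eq, h2.deriv]
  have hmin : IsLocalMin g 0 := isLocalMin_of_deriv_deriv_pos (by rw [hdd]; exact hpos)
    (by rw [hd.self_of_nhds, h10]) h1.self_of_nhds.continuousAt
  have hconst : g =ᶠ[𝓝 0] fun _ => g 0 := by
    filter_upwards [hmin, hm] with s a b using le_antisymm b a
  have hd0 : deriv g =ᶠ[𝓝 0] fun _ => 0 := by simpa using hconst.deriv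
  have : deriv (deriv g) 0 = 0 := by rw [hd0.deriv_eq]; simp
  linarith

/-- First and second order conditions at a maximum of `u² φ` along a line, after completing
the square in `u'`. -/
lemma weighted_square_max {u u1 φ : ℝ → ℝ} {u2 y k : ℝ} (hφ : ContDiff ℝ 2 φ)
    (hφ_pos : ∀ x, 0 < φ x)
    (h1 : ∀ᶠ s in 𝓝 (0 : ℝ), HasDerivAt u (u1 s) s) (h2 : HasDerivAt u1 u2 0)
    (hm : ∀ᶠ s in 𝓝 (0 : ℝ), u s ^ 2 * φ (y + s * k) ≤ u 0 ^ 2 * φ y) :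
    2 * u 0 * u1 0 * φ y + u 0 ^ 2 * (deriv φ y * k) = 0 ∧
    2 * φ y * (u 0 * u2) +
      (deriv (deriv φ) y - 2 * deriv φ y ^ 2 / φ y) * u 0 ^ 2 * k ^ 2 ≤ 0 := by
  have hl : ∀ s : ℝ, HasDerivAt (fun s => y + s * k) k s := fun s => by
    simpa using ((hasDerivAt_id s).mul_const k).const_add y
  have hφ1 : ∀ s, HasDerivAt (fun s => φ (y + s * k)) (deriv φ (y + s * k) * k) s := fun s =>
    ((hφ.differentiable (by simp)) _).hasDerivAt.comp s (hl s)
  have hφd : ContDiff ℝ 1 (deriv φ) := by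
    have : ContDiff ℝ (1 + 1) φ := by simpa [one_add_one_eq_two] using hφ
    exact (contDiff_succ_iff_deriv.1 this).2.2
  have hφ2 : ∀ s, HasDerivAt (fun s => deriv φ (y + s * k))
      (deriv (deriv φ) (y + s * k) * k) s := fun s =>
    ((hφd.differentiable (by simp)) _).hasDerivAt.comp s (hl s)
  have hg1 : ∀ᶠ s in 𝓝 (0 : ℝ), HasDerivAt (fun s => u s ^ 2 * φ (y + s * k))
      (2 * u s * u1 s * φ (y + s * k) + u s ^ 2 * (deriv φ (y + s * k) * k)) s := by
    filter_upwards [h1] with s hs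
    exact ((hs.pow 2).mul (hφ1 s)).congr_deriv (by simp)
  have hg2 : HasDerivAt
      (fun s => 2 * u s * u1 s * φ (y + s * k) + u s ^ 2 * (deriv φ (y + s * k) * k))
      (2 * u1 0 ^ 2 * φ y + 2 * u 0 * u2 * φ y + 4 * u 0 * u1 0 * deriv φ y * k
        + u 0 ^ 2 * deriv (deriv φ) y * k ^ 2) 0 := by
    have hu := h1.self_of_nhds
    refine ((((hu.const_mul 2).mul h2).mul (hφ1 0)).add
      ((hu.pow 2).mul ((hφ2 0).mul_const k))).congr_deriv ?_
    simp
    ring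
  obtain ⟨ha, hb⟩ := second_deriv_nonpos_of_max hg1 hg2 (by simpa using hm)
  simp only [zero_mul, add_zero] at ha
  refine ⟨ha, le_trans ?_ hb⟩
  have hp := hφ_pos y
  have key : 0 ≤ 2 / φ y * (u1 0 * φ y + u 0 * deriv φ y * k) ^ 2 := by positivity
  have e : 2 / φ y * (u1 0 * φ y + u 0 * deriv φ y * k) ^ 2 =
      2 * u1 0 ^ 2 * φ y + 4 * u 0 * u1 0 * deriv φ y * k +
        2 * deriv φ y ^ 2 / φ y * u 0 ^ 2 * k ^ 2 := by
    field_simp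
    ring
  rw [e] at key
  linarith

end OneDim

section Maximum

variable {m : ℕ} {S : Set ((Fin m → ℝ) × ℝ)} {u : (Fin m → ℝ) × ℝ → ℝ}

/-- The spatial coordinate directions in space-time. -/
abbrev spaceDir (i : Fin m) : (Fin m → ℝ) × ℝ := (Pi.single i 1, 0)

open scoped MatrixOrder in
lemma exists_sum_mul_eq {A : Matrix (Fin m) (Fin m) ℝ} (hsymm : ∀ i j, A i j = A j i)
    (hpos : ∀ ξ : Fin m → ℝ, 0 ≤ ∑ i, ∑ j, A i j * ξ i * ξ j) :
    ∃ M : Fin m → Fin m → ℝ, ∀ i j, A i j = ∑ k, M k i * M k j := by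
  have hA : A.PosSemidef := by
    refine Matrix.PosSemidef.of_dotProduct_mulVec_nonneg ?_ fun x => ?_
    · ext i j
      simpa using hsymm j i
    · refine (hpos x).trans_eq ?_
      simp only [dotProduct, Matrix.mulVec, Finset.mul_sum, star_trivial]
      exact Finset.sum_congr rfl fun i _ => Finset.sum_congr rfl fun j _ => by ring
  obtain ⟨B, hB⟩ := CStarAlgebra.nonneg_iff_eq_star_mul_self.mp hA.nonneg
  refine ⟨B, fun i j => ?_⟩
  rw [hB]
  simp [Matrix.mul_apply, Matrix.star_eq_conjTranspose]

/-- First and second order conditions along the direction `ξ` at a spatial maximum of `u² φ`. -/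
lemma directional_max_conditions (hS : UniqueDiffOn ℝ S) (hu : ContDiffOn ℝ ∞ u S)
    {x : Fin m → ℝ} {t : ℝ} (hq : S ∈ 𝓝 (x, t)) (k : Fin m) {φ : ℝ → ℝ}
    (hφ : ContDiff ℝ 2 φ) (hφ_pos : ∀ x, 0 < φ x)
    (hmax : ∀ᶠ y in 𝓝 x, u (y, t) ^ 2 * φ (y k) ≤ u (x, t) ^ 2 * φ (x k)) (ξ : Fin m → ℝ) :
    2 * u (x, t) * dirDeriv S (ξ, 0) u (x, t) * φ (x k)
        + u (x, t) ^ 2 * (deriv φ (x k) * ξ k) = 0 ∧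
    2 * φ (x k) * (u (x, t) * dirDeriv S (ξ, 0) (dirDeriv S (ξ, 0) u) (x, t)) +
      (deriv (deriv φ) (x k) - 2 * deriv φ (x k) ^ 2 / φ (x k)) * u (x, t) ^ 2 * ξ k ^ 2 ≤ 0 := by
  have hcont : Tendsto (fun s : ℝ => (x, t) + s • ((ξ, 0) : (Fin m → ℝ) × ℝ)) (𝓝 0)
      (𝓝 (x, t)) := by
    have : Continuous (fun s : ℝ => (x, t) + s • ((ξ, 0) : (Fin m → ℝ) × ℝ)) := by fun_prop
    simpa using this.tendsto 0
  have hcontx : Tendsto (fun s : ℝ => x + s • ξ) (𝓝 0) (𝓝 x) := by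
    have : Continuous (fun s : ℝ => x + s • ξ) := by fun_prop
    simpa using this.tendsto 0
  have hline : ∀ f : (Fin m → ℝ) × ℝ → ℝ, ContDiffOn ℝ ∞ f S → ∀ᶠ s : ℝ in 𝓝 0,
      HasDerivAt (fun s : ℝ => f ((x, t) + s • ((ξ, 0) : (Fin m → ℝ) × ℝ)))
        (dirDeriv S (ξ, 0) f ((x, t) + s • ((ξ, 0) : (Fin m → ℝ) × ℝ))) s := by
    intro f hf
    filter_upwards [hcont.eventually (eventually_mem_nhds_iff.2 hq)] with s hs
    exact hasDerivAt_line (hf.hasFDerivWithinAt_top (mem_of_mem_nhds hs)) hs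
  have key := weighted_square_max (y := x k) (k := ξ k) hφ hφ_pos (hline u hu)
    (hline _ (hu.dirDeriv hS (ξ, 0))).self_of_nhds
    (by simpa using hcontx.eventually hmax)
  simpa using key

lemma sum_single_smul_spaceDir (ξ : Fin m → ℝ) :
    ((ξ, 0) : (Fin m → ℝ) × ℝ) = ∑ i, ξ i • spaceDir i := by
  ext i
  · simp [Prod.fst_sum, Finset.sum_apply, Pi.single_apply]
  · simp [Prod.snd_sum]

/-- At a spatial maximum of `u² φ`, the elliptic part of the operator applied to `u` is controlled
by zeroth order terms. -/
lemma elliptic_max_conditions (hS : UniqueDiffOn ℝ S) (hu : ContDiffOn ℝ ∞ u S)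
    {x : Fin m → ℝ} {t : ℝ} (hq : S ∈ 𝓝 (x, t)) (k : Fin m) {φ : ℝ → ℝ}
    (hφ : ContDiff ℝ 2 φ) (hφ_pos : ∀ x, 0 < φ x)
    (hmax : ∀ᶠ y in 𝓝 x, u (y, t) ^ 2 * φ (y k) ≤ u (x, t) ^ 2 * φ (x k))
    {A : Matrix (Fin m) (Fin m) ℝ} (hsymm : ∀ i j, A i j = A j i)
    (hpos : ∀ ξ : Fin m → ℝ, 0 ≤ ∑ i, ∑ j, A i j * ξ i * ξ j) (B : Fin m → ℝ) :
    2 * u (x, t) * φ (x k) * ∑ i, B i * dirDeriv S (spaceDir i) u (x, t)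
        + u (x, t) ^ 2 * deriv φ (x k) * B k = 0 ∧
    2 * φ (x k) * u (x, t) *
        ∑ i, ∑ j, A i j * dirDeriv S (spaceDir i) (dirDeriv S (spaceDir j) u) (x, t) +
      (deriv (deriv φ) (x k) - 2 * deriv φ (x k) ^ 2 / φ (x k)) * u (x, t) ^ 2 * A k k ≤ 0 := by
  have hdir := directional_max_conditions hS hu hq k hφ hφ_pos hmax
  have hqS := mem_of_mem_nhds hq
  constructor
  · have h := (hdir B).1
    rw [sum_single_smul_spaceDir B, dirDeriv_sum_smul] at h
    linarith
  · obtain ⟨M, hM⟩ := exists_sum_mul_eq hsymm hpos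
    have h2 : ∀ ξ : Fin m → ℝ, dirDeriv S (ξ, 0) (dirDeriv S (ξ, 0) u) (x, t) =
        ∑ i, ∑ j, ξ i * ξ j * dirDeriv S (spaceDir i) (dirDeriv S (spaceDir j) u) (x, t) := by
      intro ξ
      rw [dirDeriv_dirDeriv hu hS _ _ hqS, sum_single_smul_spaceDir ξ]
      simp only [dirDeriv_dirDeriv hu hS _ _ hqS, map_sum, map_smul,
        sum_apply, smul_apply, smul_eq_mul,
        Finset.mul_sum]
      exact Finset.sum_comm.trans (Finset.sum_congr rfl fun i _ =>
        Finset.sum_congr rfl fun j _ => by ring)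
    have hsum : ∑ i, ∑ j, A i j * dirDeriv S (spaceDir i) (dirDeriv S (spaceDir j) u) (x, t) =
        ∑ l, dirDeriv S (M l, 0) (dirDeriv S (M l, 0) u) (x, t) := by
      simp only [h2, hM, Finset.sum_mul]
      exact (Finset.sum_comm.trans (Finset.sum_congr rfl fun i _ => Finset.sum_comm)).symm
    rw [hsum, hM k k, Finset.mul_sum, Finset.mul_sum, ← Finset.sum_add_distrib]
    refine Finset.sum_nonpos fun l _ => ?_
    have := (hdir (M l)).2
    nlinarith [this]

end Maximum

section Slices

variable {m : ℕ} {S : Set ((Fin m → ℝ) × ℝ)}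

lemma pd1_eq_dirDeriv {f : (Fin m → ℝ) × ℝ → ℝ} (hf : ContDiffOn ℝ ∞ f S)
    {x : Fin m → ℝ} {t : ℝ} (hq : S ∈ 𝓝 (x, t)) (i : Fin m) :
    pd1 i (fun y => f (y, t)) x = dirDeriv S (spaceDir i) f (x, t) := by
  have h := (hf.hasFDerivWithinAt_top (mem_of_mem_nhds hq)).hasFDerivAt hq
  have h2 := HasFDerivAt.comp (f := fun y => (y, t)) x h (hasFDerivAt_prodMk_left x t)
  have h3 : fderiv ℝ (fun y => f (y, t)) x = _ := h2.fderiv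
  simp [pd1, h3, dirDeriv]

lemma pd2_eq_dirDeriv (hS : UniqueDiffOn ℝ S) {f : (Fin m → ℝ) × ℝ → ℝ}
    (hf : ContDiffOn ℝ ∞ f S)
    {x : Fin m → ℝ} {t : ℝ} (hq : S ∈ 𝓝 (x, t)) (i j : Fin m) :
    pd2 i j (fun y => f (y, t)) x =
      dirDeriv S (spaceDir i) (dirDeriv S (spaceDir j) f) (x, t) := by
  rw [← pd1_eq_dirDeriv (hf.dirDeriv hS _) hq]
  have hc : Tendsto (fun y => (y, t)) (𝓝 x) (𝓝 (x, t)) :=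
    (Continuous.prodMk_left t).tendsto x
  have : (fun y => pd1 j (fun y => f (y, t)) y) =ᶠ[𝓝 x]
      fun y => dirDeriv S (spaceDir j) f (y, t) := by
    filter_upwards [hc.eventually (eventually_mem_nhds_iff.2 hq)] with y hy
    exact pd1_eq_dirDeriv hf hy j
  unfold pd2
  rw [pd1, this.fderiv_eq, pd1]

lemma deriv_slice_eq_dirDeriv {f : (Fin m → ℝ) × ℝ → ℝ} (hf : ContDiffOn ℝ ∞ f S)
    {x : Fin m → ℝ} {t : ℝ} (hq : S ∈ 𝓝 (x, t)) :
    deriv (fun s => f (x, s)) t = dirDeriv S (0, 1) f (x, t) := by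
  have h := (hf.hasFDerivWithinAt_top (mem_of_mem_nhds hq)).hasFDerivAt hq
  have h2 := h.comp_hasDerivAt t ((hasDerivAt_const t x).prodMk (hasDerivAt_id t))
  exact h2.deriv

end Slices

section Equation

variable {n : ℕ} {S : Set ((Fin (n + 1) → ℝ) × ℝ)}

/-- A parabolic operator with coefficients depending on time only, written with derivatives
within `S`. -/
noncomputable def parabolicWithin {m : ℕ} (S : Set ((Fin m → ℝ) × ℝ))
    (a : Fin m → Fin m → ℝ → ℝ) (B : Fin m → ℝ → ℝ) (C : ℝ → ℝ)
    (f : (Fin m → ℝ) × ℝ → ℝ) (q : (Fin m → ℝ) × ℝ) : ℝ :=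
  dirDeriv S (0, 1) f q
    - ∑ i, ∑ j, a i j q.2 * dirDeriv S (spaceDir i) (dirDeriv S (spaceDir j) f) q
    + ∑ i, B i q.2 * dirDeriv S (spaceDir i) f q
    + C q.2 * f q

lemma transOp_eq_parabolicWithin (hS : UniqueDiffOn ℝ S) (p : ℝ)
    (a : Fin (n+1) → Fin (n+1) → ℝ → ℝ) (b : Fin (n+1) → ℝ → ℝ) (c : ℝ → ℝ)
    {ε : (Fin (n+1) → ℝ) → ℝ → ℝ}
    (hε : ContDiffOn ℝ ∞ (fun q : (Fin (n+1) → ℝ) × ℝ => ε q.1 q.2) S)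
    {x : Fin (n+1) → ℝ} {t : ℝ} (hq : S ∈ 𝓝 (x, t)) :
    transOp p a b c ε x t = parabolicWithin S a
      (fun i t => 2 * p * a i (Fin.last n) t + b i t)
      (fun t => c t - p * b (Fin.last n) t - p ^ 2 * a (Fin.last n) (Fin.last n) t)
      (fun q => ε q.1 q.2) (x, t) := by
  have h1 := fun i => pd1_eq_dirDeriv hε hq i
  have h2 := fun i j => pd2_eq_dirDeriv hS hε hq i j
  have h3 := deriv_slice_eq_dirDeriv hε hq
  simp only at h1 h2 h3
  simp only [transOp, parabolicWithin, h1, h2, h3]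
  rw [← Finset.sum_erase_add (a := Fin.last n) _ (fun i => (2 * p * a i (Fin.last n) t + b i t) *
    dirDeriv S (spaceDir i) (fun q => ε q.1 q.2) (x, t)) (Finset.mem_univ _)]
  ring

variable {m : ℕ} {S : Set ((Fin m → ℝ) × ℝ)} {a : Fin m → Fin m → ℝ → ℝ} {B : Fin m → ℝ → ℝ}
  {C : ℝ → ℝ} {f : (Fin m → ℝ) × ℝ → ℝ}

lemma continuousOn_parabolicWithin (hS : UniqueDiffOn ℝ S) (hf : ContDiffOn ℝ ∞ f S)
    (ha : ∀ i j, Continuous (a i j)) (hB : ∀ i, Continuous (B i)) (hC : Continuous C) :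
    ContinuousOn (parabolicWithin S a B C f) S := by
  have h1 := fun v => (hf.dirDeriv hS v).continuousOn
  have h2 := fun v w => ((hf.dirDeriv hS v).dirDeriv hS w).continuousOn
  refine (((h1 _).sub ?_).add ?_).add ?_
  · exact continuousOn_finsetSum _ fun i _ => continuousOn_finsetSum _ fun j _ =>
      ((ha i j).comp continuous_snd).continuousOn.mul (h2 _ _)
  · exact continuousOn_finsetSum _ fun i _ => ((hB i).comp continuous_snd).continuousOn.mul (h1 _)
  · exact (hC.comp continuous_snd).continuousOn.mul hf.continuousOn

/-- Since the coefficients do not depend on space, spatial derivatives of solutions are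
solutions. -/
lemma parabolicWithin_dirDeriv_eq_zero (hS : UniqueDiffOn ℝ S) (hcl : S ⊆ closure (interior S))
    (hf : ContDiffOn ℝ ∞ f S) {q : (Fin m → ℝ) × ℝ} (hq : S ∈ 𝓝 q)
    (h0 : ∀ᶠ y in 𝓝 q, parabolicWithin S a B C f y = 0) (k : Fin m) :
    parabolicWithin S a B C (dirDeriv S (spaceDir k) f) q = 0 := by
  have hqS := mem_of_mem_nhds hq
  have hline : ∀ g : (Fin m → ℝ) × ℝ → ℝ, ContDiffOn ℝ ∞ g S →
      HasDerivAt (fun s : ℝ => g (q + s • spaceDir k)) (dirDeriv S (spaceDir k) g q) 0 := by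
    intro g hg
    exact hasDerivAt_line (S := S) (by simpa using hg.hasFDerivWithinAt_top hqS)
      (by simpa using hq)
  have hd1 := fun v => hline _ (hf.dirDeriv hS v)
  have hd2 := fun v w => hline _ ((hf.dirDeriv hS v).dirDeriv hS w)
  have hsnd : ∀ s : ℝ, (q + s • spaceDir k).2 = q.2 := by simp
  have hderiv := (((hd1 (0, 1)).sub (HasDerivAt.fun_sum (u := Finset.univ) fun i _ =>
      HasDerivAt.fun_sum (u := Finset.univ) fun j _ =>
        (hd2 (spaceDir j) (spaceDir i)).const_mul (a i j q.2))).add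
      (HasDerivAt.fun_sum (u := Finset.univ) fun i _ => (hd1 (spaceDir i)).const_mul (B i q.2))).add
      ((hline f hf).const_mul (C q.2))
  have hcont : Tendsto (fun s : ℝ => q + s • spaceDir k) (𝓝 0) (𝓝 q) := by
    have : Continuous (fun s : ℝ => q + s • spaceDir k) := by fun_prop
    simpa using this.tendsto 0
  have hzero := (hasDerivAt_const (0 : ℝ) (0 : ℝ)).congr_of_eventuallyEq
    (f₁ := fun s : ℝ => parabolicWithin S a B C f (q + s • spaceDir k)) (hcont.eventually h0)
  have hEq := hzero.unique (hderiv.congr_of_eventuallyEq (Eventually.of_forall fun s => by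
    simp [parabolicWithin]))
  have hc1 : ∀ v, dirDeriv S (spaceDir k) (dirDeriv S v f) q =
      dirDeriv S v (dirDeriv S (spaceDir k) f) q := fun v => dirDeriv_comm hf hS hcl _ _ hqS
  have hc2 : ∀ v w, dirDeriv S (spaceDir k) (dirDeriv S v (dirDeriv S w f)) q =
      dirDeriv S v (dirDeriv S w (dirDeriv S (spaceDir k) f)) q := fun v w => by
    rw [dirDeriv_comm (hf.dirDeriv hS w) hS hcl _ _ hqS]
    exact dirDeriv_congr (fun y hy => dirDeriv_comm hf hS hcl _ _ hy) hqS _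
  simp only [hc1, hc2] at hEq
  exact hEq.symm

/-- At an interior point where `u² φ` has a spatial maximum, a solution `u` satisfies an
ordinary differential inequality in time. -/
lemma time_deriv_le_of_spatial_max (hS : UniqueDiffOn ℝ S) {u : (Fin m → ℝ) × ℝ → ℝ}
    (hu : ContDiffOn ℝ ∞ u S)
    {x : Fin m → ℝ} {t : ℝ} (hq : S ∈ 𝓝 (x, t)) (k : Fin m) {φ : ℝ → ℝ}
    (hφ : ContDiff ℝ 2 φ) (hφ_pos : ∀ x, 0 < φ x)
    (hmax : ∀ᶠ y in 𝓝 x, u (y, t) ^ 2 * φ (y k) ≤ u (x, t) ^ 2 * φ (x k))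
    (hsymm : ∀ i j, a i j t = a j i t)
    (hpos : ∀ ξ : Fin m → ℝ, 0 ≤ ∑ i, ∑ j, a i j t * ξ i * ξ j)
    (hpde : parabolicWithin S a B C u (x, t) = 0) :
    2 * u (x, t) * dirDeriv S (0, 1) u (x, t) ≤ u (x, t) ^ 2 *
      (2 * a k k t * (deriv φ (x k) / φ (x k)) ^ 2 - a k k t * (deriv (deriv φ) (x k) / φ (x k))
        + B k t * (deriv φ (x k) / φ (x k)) - 2 * C t) := by
  obtain ⟨h1, h2⟩ := elliptic_max_conditions hS hu hq k hφ hφ_pos hmax (A := fun i j => a i j t)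
    hsymm hpos (fun i => B i t)
  have hp := hφ_pos (x k)
  simp only [parabolicWithin] at hpde
  refine le_of_mul_le_mul_left ?_ hp
  have e : φ (x k) * (u (x, t) ^ 2 *
      (2 * a k k t * (deriv φ (x k) / φ (x k)) ^ 2 - a k k t * (deriv (deriv φ) (x k) / φ (x k))
        + B k t * (deriv φ (x k) / φ (x k)) - 2 * C t)) =
      u (x, t) ^ 2 * deriv φ (x k) * B k t
      - (deriv (deriv φ) (x k) - 2 * deriv φ (x k) ^ 2 / φ (x k)) * u (x, t) ^ 2 * a k k t
      - 2 * C t * φ (x k) * u (x, t) ^ 2 := by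
    field_simp
    ring
  rw [e]
  linear_combination -h1 + h2 + 2 * u (x, t) * φ (x k) * hpde

end Equation

section Cylinder

variable {n : ℕ}

/-- The space-time cylinder over `D × (α, β]` and `(0, T)`. -/
def rightClosedCylinder (D : Set (Fin n → ℝ)) (α β T : ℝ) : Set ((Fin (n + 1) → ℝ) × ℝ) :=
  {q | Fin.init q.1 ∈ D ∧ q.1 (Fin.last n) ∈ Ioc α β ∧ q.2 ∈ Ioo 0 T}

/-- The space-time cylinder over `D × (α, β)` and `(0, T)`. -/
def openCylinder (D : Set (Fin n → ℝ)) (α β T : ℝ) : Set ((Fin (n + 1) → ℝ) × ℝ) :=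
  {q | Fin.init q.1 ∈ D ∧ q.1 (Fin.last n) ∈ Ioo α β ∧ q.2 ∈ Ioo 0 T}

variable {D : Set (Fin n → ℝ)} {α β T : ℝ}

lemma isOpen_openCylinder (hD : IsOpen D) : IsOpen (openCylinder D α β T) := by
  have h1 : Continuous fun q : (Fin (n + 1) → ℝ) × ℝ => Fin.init (α := fun _ => ℝ) q.1 := by
    exact continuous_pi fun i => (continuous_apply _).comp continuous_fst
  have h2 : Continuous fun q : (Fin (n + 1) → ℝ) × ℝ => q.1 (Fin.last n) := by fun_prop
  exact (hD.preimage h1).inter ((isOpen_Ioo.preimage h2).inter (isOpen_Ioo.preimage continuous_snd))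

lemma openCylinder_subset : openCylinder D α β T ⊆ rightClosedCylinder D α β T :=
  fun _ h => ⟨h.1, Ioo_subset_Ioc_self h.2.1, h.2.2⟩

lemma rightClosedCylinder_mem_nhds (hD : IsOpen D) {q : (Fin (n + 1) → ℝ) × ℝ}
    (hq : q ∈ openCylinder D α β T) : rightClosedCylinder D α β T ∈ 𝓝 q :=
  mem_of_superset ((isOpen_openCylinder hD).mem_nhds hq) openCylinder_subset

lemma rightClosedCylinder_subset_closure :
    rightClosedCylinder D α β T ⊆ closure (openCylinder D α β T) := by
  rintro q ⟨h1, h2, h3⟩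
  have hcont : Continuous fun s : ℝ => q + s • spaceDir (Fin.last n) := by fun_prop
  have h0 : (0 : ℝ) ∈ closure (Ioo (α - q.1 (Fin.last n)) 0) := by
    rw [closure_Ioo (by linarith [h2.1])]
    exact ⟨by linarith [h2.1], le_rfl⟩
  have := map_mem_closure hcont h0 (t := openCylinder D α β T) ?_
  · simpa using this
  · rintro s ⟨hs1, hs2⟩
    refine ⟨?_, ?_, by simpa using h3⟩
    · convert h1 using 1
      ext i
      simp [Fin.init, (Fin.castSucc_lt_last i).ne]
    · simp only [Prod.fst_add, Prod.smul_fst, Pi.add_apply, Pi.smul_apply, Pi.single_eq_same,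
        smul_eq_mul, mul_one, mem_Ioo]
      exact ⟨by linarith, by linarith [h2.2]⟩

lemma rightClosedCylinder_subset_closure_interior (hD : IsOpen D) :
    rightClosedCylinder D α β T ⊆ closure (interior (rightClosedCylinder D α β T)) :=
  rightClosedCylinder_subset_closure.trans
    (closure_mono (interior_maximal openCylinder_subset (isOpen_openCylinder hD)))

lemma uniqueDiffOn_rightClosedCylinder (hD : IsOpen D) :
    UniqueDiffOn ℝ (rightClosedCylinder D α β T) := by
  have hH : UniqueDiffOn ℝ {q : (Fin (n + 1) → ℝ) × ℝ | q.1 (Fin.last n) ≤ β} := by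
    refine uniqueDiffOn_convex (fun x hx y hy r s hr hs hrs => ?_) ⟨(fun _ => β - 1, 0), ?_⟩
    · simp only [mem_ofPred_eq, Prod.fst_add, Prod.smul_fst, Pi.add_apply, Pi.smul_apply,
        smul_eq_mul] at *
      calc _ ≤ r * β + s * β := by gcongr
        _ = β := by rw [← add_mul, hrs, one_mul]
    · refine interior_maximal (t := {q : (Fin (n + 1) → ℝ) × ℝ | q.1 (Fin.last n) < β})
         (fun q hq => (show q.1 (Fin.last n) < β from hq).le) ?_ ?_
      · exact isOpen_lt (by fun_prop) continuous_const
      · simp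
  convert hH.inter (isOpen_openCylinder (D := D) (α := α) (β := β + 1) (T := T) hD) using 1
  ext q
  constructor
  · rintro ⟨h1, h2, h3⟩
    exact ⟨h2.2, h1, ⟨h2.1, by linarith [h2.2]⟩, h3⟩
  · rintro ⟨h0, h1, h2, h3⟩
    exact ⟨h1, ⟨h2.1, h0⟩, h3⟩

/-- Moving in a direction tangential to the face `xₙ = β` stays in the cylinder. -/
lemma eventually_mem_rightClosedCylinder (hD : IsOpen D) {q v : (Fin (n + 1) → ℝ) × ℝ}
    (hq : q ∈ rightClosedCylinder D α β T) (hv : v.1 (Fin.last n) = 0) :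
    ∀ᶠ s : ℝ in 𝓝 0, q + s • v ∈ rightClosedCylinder D α β T := by
  have hcont : Continuous fun s : ℝ => q + s • v := by fun_prop
  have hU := (isOpen_openCylinder (D := D) (α := α) (β := β + 1) (T := T) hD).preimage hcont
  have h0 : (0 : ℝ) ∈ (fun s : ℝ => q + s • v) ⁻¹' openCylinder D α (β + 1) T := by
    simpa using (show q ∈ openCylinder D α (β + 1) T from
      ⟨hq.1, ⟨hq.2.1.1, by linarith [hq.2.1.2]⟩, hq.2.2⟩)
  filter_upwards [hU.mem_nhds h0] with s hs
  refine ⟨hs.1, ⟨hs.2.1.1, ?_⟩, hs.2.2⟩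
  simpa [hv] using hq.2.1.2

lemma closure_cylinder_base (hab : α < β) :
    closure {x : Fin (n+1) → ℝ | Fin.init x ∈ D ∧ x (Fin.last n) ∈ Ioo α β} =
      {x : Fin (n+1) → ℝ | Fin.init x ∈ closure D ∧ x (Fin.last n) ∈ Icc α β} := by
  have hinit : Continuous fun x : Fin (n + 1) → ℝ => Fin.init (α := fun _ => ℝ) x :=
    continuous_pi fun i => continuous_apply _
  apply Subset.antisymm
  · refine closure_minimal (fun x hx => ⟨subset_closure hx.1, Ioo_subset_Icc_self hx.2⟩) ?_
    exact (isClosed_closure.preimage hinit).inter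
      (isClosed_Icc.preimage (continuous_apply (Fin.last n)))
  · rintro x ⟨h1, h2⟩
    have hc : Continuous fun r : (Fin n → ℝ) × ℝ =>
        (Fin.snoc (α := fun _ => ℝ) r.1 r.2 : Fin (n + 1) → ℝ) :=
      Continuous.finSnoc (A := fun _ => ℝ) continuous_fst continuous_snd
    have hmem : (Fin.init x, x (Fin.last n)) ∈ closure (D ×ˢ Ioo α β) := by
      rw [closure_prod_eq, closure_Ioo hab.ne]
      exact ⟨h1, h2⟩
    have := map_mem_closure hc hmem
      (t := {x : Fin (n+1) → ℝ | Fin.init x ∈ D ∧ x (Fin.last n) ∈ Ioo α β})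
      (fun r hr => ⟨by simpa using hr.1, by simpa using hr.2⟩)
    simpa using this

variable {f : (Fin (n + 1) → ℝ) × ℝ → ℝ}

/-- On the face `xₙ = β` where `f` vanishes, the equation reduces to a relation between the first
two normal derivatives wherever the tangential derivatives of `(∂ₙf)²` vanish. -/
lemma normal_deriv_relation_on_face (hD : IsOpen D) {a : Fin (n + 1) → Fin (n + 1) → ℝ → ℝ}
    {B : Fin (n + 1) → ℝ → ℝ} {C : ℝ → ℝ} {S : Set ((Fin (n + 1) → ℝ) × ℝ)}
    (hSdef : S = rightClosedCylinder D α β T) (hf : ContDiffOn ℝ ∞ f S)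
    (hface : ∀ q ∈ S, q.1 (Fin.last n) = β → f q = 0)
    {q : (Fin (n + 1) → ℝ) × ℝ} (hq : q ∈ S) (hqβ : q.1 (Fin.last n) = β)
    (hpde : parabolicWithin S a B C f q = 0)
    (htan : ∀ i ≠ Fin.last n, dirDeriv S (spaceDir (Fin.last n)) f q *
      dirDeriv S (spaceDir i) (dirDeriv S (spaceDir (Fin.last n)) f) q = 0) :
    a (Fin.last n) (Fin.last n) q.2 * (dirDeriv S (spaceDir (Fin.last n)) f q *
      dirDeriv S (spaceDir (Fin.last n)) (dirDeriv S (spaceDir (Fin.last n)) f) q) =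
    B (Fin.last n) q.2 * dirDeriv S (spaceDir (Fin.last n)) f q ^ 2 := by
  have hS : UniqueDiffOn ℝ S := hSdef ▸ uniqueDiffOn_rightClosedCylinder hD
  have hcl : S ⊆ closure (interior S) :=
    hSdef ▸ rightClosedCylinder_subset_closure_interior hD
  have hvanish : ∀ g : (Fin (n + 1) → ℝ) × ℝ → ℝ, ContDiffOn ℝ ∞ g S →
      (∀ q ∈ S, q.1 (Fin.last n) = β → g q = 0) →
      ∀ v : (Fin (n + 1) → ℝ) × ℝ, v.1 (Fin.last n) = 0 →
      ∀ q ∈ S, q.1 (Fin.last n) = β → dirDeriv S v g q = 0 := by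
    intro g hg h0 v hv q hq hqβ
    have hev : ∀ᶠ s : ℝ in 𝓝 0, q + s • v ∈ S := by
      rw [hSdef] at hq ⊢
      exact eventually_mem_rightClosedCylinder hD hq hv
    exact dirDeriv_eq_zero_of_line hg hq hev (hev.mono fun s hs => h0 _ hs (by simp [hv, hqβ]))
  have hsp : ∀ i ≠ Fin.last n, (spaceDir i : (Fin (n + 1) → ℝ) × ℝ).1 (Fin.last n) = 0 :=
    fun i hi => by simp [hi.symm]
  have ht : dirDeriv S (0, 1) f q = 0 := hvanish f hf hface _ rfl q hq hqβ
  have h1 : ∀ i ≠ Fin.last n, ∀ q ∈ S, q.1 (Fin.last n) = β → dirDeriv S (spaceDir i) f q = 0 :=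
    fun i hi => hvanish f hf hface _ (hsp i hi)
  have hB : ∑ i, B i q.2 * dirDeriv S (spaceDir i) f q =
      B (Fin.last n) q.2 * dirDeriv S (spaceDir (Fin.last n)) f q :=
    Finset.sum_eq_single _ (fun i _ hi => by rw [h1 i hi q hq hqβ, mul_zero]) (by simp)
  set ν := dirDeriv S (spaceDir (Fin.last n)) f with hν
  have hA : ν q * ∑ i, ∑ j, a i j q.2 * dirDeriv S (spaceDir i) (dirDeriv S (spaceDir j) f) q =
      ν q * (a (Fin.last n) (Fin.last n) q.2 * dirDeriv S (spaceDir (Fin.last n)) ν q) := by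
    rw [Finset.mul_sum, Finset.sum_eq_single (Fin.last n), Finset.mul_sum,
      Finset.sum_eq_single (Fin.last n)]
    · intro j _ hj
      rw [dirDeriv_comm hf hS hcl _ _ hq, ← hν]
      linear_combination a (Fin.last n) j q.2 * htan j hj
    · simp
    · intro i _ hi
      rw [Finset.mul_sum]
      refine Finset.sum_eq_zero fun j _ => ?_
      by_cases hj : j = Fin.last n
      · rw [hj, ← hν]
        linear_combination a i (Fin.last n) q.2 * htan i hi
      · rw [hvanish _ (hf.dirDeriv hS _) (h1 j hj) _ (hsp i hi) q hq hqβ]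
        simp
    · simp
  simp only [parabolicWithin, ht, hB, hface q hq hqβ] at hpde
  linear_combination -hA - ν q * hpde

end Cylinder

section WeightedSquare

variable {n : ℕ} {D : Set (Fin n → ℝ)} {α β T : ℝ} {φ ϕ : ℝ → ℝ}

lemma zeroth_order_coeff_le {A r r₂ B C sA sr sr₂ sB sC : ℝ} (hA : |A| ≤ sA) (hr : |r| ≤ sr)
    (hr₂ : |r₂| ≤ sr₂) (hB : |B| ≤ sB) (hC : |C| ≤ sC) :
    2 * A * r ^ 2 - A * r₂ + B * r - 2 * C ≤
      sA * sr₂ + 2 * sA * sr ^ 2 + 2 * sC + sB * sr := by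
  have hA0 := (abs_nonneg A).trans hA
  have hB0 := (abs_nonneg B).trans hB
  have h1 : A * r ^ 2 ≤ sA * sr ^ 2 := by
    refine (le_abs_self _).trans ?_
    rw [abs_mul, abs_pow]
    gcongr
  have h2 : -(A * r₂) ≤ sA * sr₂ := by
    refine (neg_le_abs _).trans ?_
    rw [abs_mul]
    gcongr
  have h3 : B * r ≤ sB * sr := by
    refine (le_abs_self _).trans ?_
    rw [abs_mul]
    gcongr
  have h4 : -C ≤ sC := (neg_le_abs _).trans hC
  linarith

/-- The one-sided first order condition in time at a maximum of `u² φ ϕ - η t`. -/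
lemma time_max_condition {m : ℕ} {S : Set ((Fin m → ℝ) × ℝ)} {u : (Fin m → ℝ) × ℝ → ℝ}
    (hu : ContDiffOn ℝ ∞ u S) {x : Fin m → ℝ} {t w η : ℝ} (hq : S ∈ 𝓝 (x, t))
    (hϕ : ContDiff ℝ 1 ϕ)
    (hmax : ∀ᶠ s in 𝓝[≤] (0 : ℝ), u (x, t + s) ^ 2 * w * ϕ (t + s) - η * (t + s) ≤
      u (x, t) ^ 2 * w * ϕ t - η * t) :
    η ≤ 2 * u (x, t) * dirDeriv S (0, 1) u (x, t) * w * ϕ t + u (x, t) ^ 2 * w * deriv ϕ t := by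
  have h1 : HasDerivAt (fun s : ℝ => u (x, t + s)) (dirDeriv S (0, 1) u (x, t)) 0 := by
    have := hasDerivAt_line (f := u) (S := S) (q := (x, t)) (v := (0, 1)) (r := 0)
      (by simpa using hu.hasFDerivWithinAt_top (mem_of_mem_nhds hq)) (by simpa using hq)
    simpa [dirDeriv] using this
  have hl : HasDerivAt (fun s : ℝ => t + s) 1 0 := (hasDerivAt_id 0).const_add t
  have h2 : HasDerivAt (fun s : ℝ => ϕ (t + s)) (deriv ϕ t) 0 := by
    have := HasDerivAt.comp (h := fun s : ℝ => t + s) 0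
      ((hϕ.differentiable (by simp)) (t + 0)).hasDerivAt hl
    simpa [Function.comp_def] using this
  have h3 := (((h1.pow 2).mul_const w).mul h2).sub (hl.const_mul η)
  have h4 := deriv_nonneg_of_left_max h3.hasDerivWithinAt (by simpa using hmax)
  simp at h4
  linarith

/-- A maximum of `u² φ ϕ - η t` cannot be attained in the interior when `η > 0`. -/
lemma not_interior_max (hD : IsOpen D) {a : Fin (n + 1) → Fin (n + 1) → ℝ → ℝ}
    {B : Fin (n + 1) → ℝ → ℝ} {C : ℝ → ℝ} {S : Set ((Fin (n + 1) → ℝ) × ℝ)}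
    (hSdef : S = rightClosedCylinder D α β T) {u : (Fin (n + 1) → ℝ) × ℝ → ℝ}
    (hu : ContDiffOn ℝ ∞ u S) {q : (Fin (n + 1) → ℝ) × ℝ} (hq : q ∈ openCylinder D α β T)
    (hpde : parabolicWithin S a B C u q = 0)
    (hsymm : ∀ i j, a i j q.2 = a j i q.2)
    (hpos : ∀ ξ : Fin (n + 1) → ℝ, 0 ≤ ∑ i, ∑ j, a i j q.2 * ξ i * ξ j)
    (hφ : ContDiff ℝ 2 φ) (hφ_pos : ∀ x, 0 < φ x) (hϕ : ContDiff ℝ 1 ϕ) (hϕ_pos : 0 < ϕ q.2)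
    {η Γ : ℝ} (hη : 0 < η) (hϕ_decay : deriv ϕ q.2 / ϕ q.2 ≤ -Γ)
    (hΓ : 2 * a (Fin.last n) (Fin.last n) q.2 *
        (deriv φ (q.1 (Fin.last n)) / φ (q.1 (Fin.last n))) ^ 2
      - a (Fin.last n) (Fin.last n) q.2 *
        (deriv (deriv φ) (q.1 (Fin.last n)) / φ (q.1 (Fin.last n)))
      + B (Fin.last n) q.2 * (deriv φ (q.1 (Fin.last n)) / φ (q.1 (Fin.last n)))
      - 2 * C q.2 ≤ Γ)
    (hmax : ∀ y ∈ S, y.2 ≤ q.2 → u y ^ 2 * φ (y.1 (Fin.last n)) * ϕ y.2 - η * y.2 ≤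
      u q ^ 2 * φ (q.1 (Fin.last n)) * ϕ q.2 - η * q.2) : False := by
  obtain ⟨x, t⟩ := q
  simp only at *
  have hS : UniqueDiffOn ℝ S := hSdef ▸ uniqueDiffOn_rightClosedCylinder hD
  have hqS : S ∈ 𝓝 (x, t) := hSdef ▸ rightClosedCylinder_mem_nhds hD hq
  have hspace : ∀ᶠ y in 𝓝 x, u (y, t) ^ 2 * φ (y (Fin.last n)) ≤
      u (x, t) ^ 2 * φ (x (Fin.last n)) := by
    have hc : Tendsto (fun y => (y, t)) (𝓝 x) (𝓝 (x, t)) :=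
      (Continuous.prodMk_left t).tendsto x
    filter_upwards [hc.eventually hqS] with y hy
    have := hmax (y, t) hy le_rfl
    exact le_of_mul_le_mul_right (by simpa using this) hϕ_pos
  have htime : ∀ᶠ s in 𝓝[≤] (0 : ℝ),
      u (x, t + s) ^ 2 * φ (x (Fin.last n)) * ϕ (t + s) - η * (t + s) ≤
      u (x, t) ^ 2 * φ (x (Fin.last n)) * ϕ t - η * t := by
    have hc : Tendsto (fun s : ℝ => (x, t + s)) (𝓝 0) (𝓝 (x, t)) := by
      have : Continuous (fun s : ℝ => (x, t + s)) := by fun_prop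
      simpa using this.tendsto 0
    filter_upwards [(hc.mono_left nhdsWithin_le_nhds).eventually hqS, self_mem_nhdsWithin]
      with s hs hs0
    exact hmax (x, t + s) hs (by simpa using hs0)
  have h1 := time_max_condition hu hqS hϕ htime
  have h2 := time_deriv_le_of_spatial_max hS hu hqS (Fin.last n) hφ hφ_pos hspace hsymm hpos hpde
  have hφx := hφ_pos (x (Fin.last n))
  have h3 : deriv ϕ t ≤ -Γ * ϕ t := (div_le_iff₀ hϕ_pos).1 hϕ_decay
  have h4 := h2.trans (mul_le_mul_of_nonneg_left hΓ (sq_nonneg (u (x, t))))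
  have h5 := mul_le_mul_of_nonneg_right h4 (mul_pos hφx hϕ_pos).le
  have h6 := mul_le_mul_of_nonneg_left h3 (mul_nonneg (sq_nonneg (u (x, t))) hφx.le)
  linarith

/-- A maximum of `(∂ₙf)² φ ϕ` in space can be attained on the Dirichlet face `xₙ = β` only
where `∂ₙf` vanishes. -/
lemma normal_deriv_eq_zero_of_face_max (hD : IsOpen D)
    {a : Fin (n + 1) → Fin (n + 1) → ℝ → ℝ}
    {B : Fin (n + 1) → ℝ → ℝ} {C : ℝ → ℝ} {S : Set ((Fin (n + 1) → ℝ) × ℝ)}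
    (hSdef : S = rightClosedCylinder D α β T) {f : (Fin (n + 1) → ℝ) × ℝ → ℝ}
    (hf : ContDiffOn ℝ ∞ f S) (hface : ∀ q ∈ S, q.1 (Fin.last n) = β → f q = 0)
    {q : (Fin (n + 1) → ℝ) × ℝ} (hq : q ∈ S) (hqβ : q.1 (Fin.last n) = β)
    (hpde : parabolicWithin S a B C f q = 0)
    (hpos : 0 < a (Fin.last n) (Fin.last n) q.2)
    (hφ : ContDiff ℝ 2 φ) (hφ_pos : ∀ x, 0 < φ x)
    (hsign : 2 * B (Fin.last n) q.2 / a (Fin.last n) (Fin.last n) q.2 + deriv φ β / φ β < 0)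
    (hmax : ∀ y ∈ S, y.2 = q.2 →
      dirDeriv S (spaceDir (Fin.last n)) f y ^ 2 * φ (y.1 (Fin.last n)) ≤
      dirDeriv S (spaceDir (Fin.last n)) f q ^ 2 * φ (q.1 (Fin.last n))) :
    dirDeriv S (spaceDir (Fin.last n)) f q = 0 := by
  have hS : UniqueDiffOn ℝ S := hSdef ▸ uniqueDiffOn_rightClosedCylinder hD
  have hφβ := hφ_pos β
  have hrel := normal_deriv_relation_on_face (f := f) hD hSdef hf hface hq hqβ hpde
  set u := dirDeriv S (spaceDir (Fin.last n)) f with hudef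
  have hu : ContDiffOn ℝ ∞ u S := hf.dirDeriv hS _
  have hline : ∀ v, ∀ J : Set ℝ, (∀ s ∈ J, q + s • v ∈ S) →
      HasDerivWithinAt (fun s : ℝ => u (q + s • v)) (dirDeriv S v u q) J 0 := fun v J hJ =>
    hasDerivWithinAt_line (S := S) (by simpa using hu.hasFDerivWithinAt_top hq) hJ
  have htan : ∀ i ≠ Fin.last n, u q * dirDeriv S (spaceDir i) u q = 0 := by
    intro i hi
    have hev : ∀ᶠ s : ℝ in 𝓝 0, q + s • spaceDir i ∈ S := by
      rw [hSdef] at hq ⊢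
      exact eventually_mem_rightClosedCylinder hD hq (by simp [hi.symm])
    have h1 := (hline (spaceDir i) {s | q + s • spaceDir i ∈ S} fun s hs => hs).hasDerivAt hev
    have h2 : IsLocalMax (fun s : ℝ => u (q + s • spaceDir i) ^ 2) 0 := by
      filter_upwards [hev] with s hs
      have := hmax _ hs (by simp)
      simp only [hqβ, Prod.fst_add, Prod.smul_fst, Pi.add_apply, Pi.smul_apply, ne_eq,
        hi.symm, not_false_eq_true, Pi.single_eq_of_ne, smul_eq_mul, mul_zero, add_zero] at this
      simpa using le_of_mul_le_mul_right this hφβ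
    have h3 := h2.hasDerivAt_eq_zero (h1.pow 2)
    simp at h3
    simpa using h3
  have hrel := hrel htan
  have hnormal : 0 ≤ 2 * u q * dirDeriv S (spaceDir (Fin.last n)) u q * φ β
      + u q ^ 2 * deriv φ β := by
    have hq' : q ∈ rightClosedCylinder D α β T := hSdef ▸ hq
    have hmem : ∀ s ∈ Ioc (α - β) 0, q + s • spaceDir (Fin.last n) ∈ S := by
      rintro s ⟨hs1, hs2⟩
      rw [hSdef]
      refine ⟨?_, ?_, by simpa using hq'.2.2⟩
      · convert hq'.1 using 1
        ext i
        simp [Fin.init, (Fin.castSucc_lt_last i).ne]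
      · simp only [Prod.fst_add, Prod.smul_fst, Pi.add_apply, Pi.smul_apply, Pi.single_eq_same,
          smul_eq_mul, mul_one, mem_Ioc, hqβ]
        exact ⟨by linarith, by linarith⟩
    have hαβ : α - β < 0 := by linarith [hq'.2.1.1, hq'.2.1.2]
    have hnhds : Ioc (α - β) 0 ∈ 𝓝[≤] (0 : ℝ) := Ioc_mem_nhdsLE hαβ
    have h1 := (hline _ _ hmem).mono_of_mem_nhdsWithin hnhds
    have hl : HasDerivAt (fun s : ℝ => β + s) 1 0 := (hasDerivAt_id 0).const_add β
    have h2 : HasDerivAt (fun s : ℝ => φ (β + s)) (deriv φ β) 0 := by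
      have := HasDerivAt.comp (h := fun s : ℝ => β + s) 0
        ((hφ.differentiable (by simp)) (β + 0)).hasDerivAt hl
      simpa [Function.comp_def] using this
    have h3 := deriv_nonneg_of_left_max ((h1.pow 2).mul h2.hasDerivWithinAt) (by
      filter_upwards [hnhds] with s hs
      have := hmax _ (hmem s hs) (by simp)
      simpa [hqβ, Prod.mk_zero_zero] using this)
    simpa [Prod.mk_zero_zero] using h3
  have e : u q ^ 2 * φ β * (2 * B (Fin.last n) q.2 / a (Fin.last n) (Fin.last n) q.2
      + deriv φ β / φ β) = 2 * u q * dirDeriv S (spaceDir (Fin.last n)) u q * φ β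
      + u q ^ 2 * deriv φ β := by
    field_simp
    linear_combination -2 * φ β * hrel
  by_contra hne
  have hsq : 0 < u q ^ 2 := by positivity
  have hneg : u q ^ 2 * φ β * (2 * B (Fin.last n) q.2 / a (Fin.last n) (Fin.last n) q.2
      + deriv φ β / φ β) < 0 := mul_neg_of_pos_of_neg (by positivity) hsign
  linarith

end WeightedSquare

section NormalDerivative

variable {n : ℕ} {D : Set (Fin n → ℝ)} {α β : ℝ}

/-- The line through `x` in the last coordinate direction stays in the closed cylinder base. -/
lemma line_mem_closed_base {x : Fin (n + 1) → ℝ} (hx : Fin.init x ∈ D) {s : ℝ}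
    (hs : s ∈ Icc (α - x (Fin.last n)) (β - x (Fin.last n))) :
    x + s • Pi.single (Fin.last n) 1 ∈
      {x : Fin (n+1) → ℝ | Fin.init x ∈ D ∧ x (Fin.last n) ∈ Icc α β} := by
  refine ⟨?_, ?_⟩
  · convert hx using 1
    ext i
    simp [Fin.init, (Fin.castSucc_lt_last i).ne]
  · simp only [Pi.add_apply, Pi.smul_apply, Pi.single_eq_same, smul_eq_mul, mul_one, mem_Icc]
    exact ⟨by linarith [hs.1], by linarith [hs.2]⟩

/-- Derivatives in the last coordinate direction are determined by the restriction to the line. -/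
lemma hasDerivWithinAt_normal_line {g : (Fin (n + 1) → ℝ) → ℝ} {L : (Fin (n + 1) → ℝ) →L[ℝ] ℝ}
    {x : Fin (n + 1) → ℝ} (hx : Fin.init x ∈ D)
    (h : HasFDerivWithinAt g L
      {x : Fin (n+1) → ℝ | Fin.init x ∈ D ∧ x (Fin.last n) ∈ Icc α β} x) :
    HasDerivWithinAt (fun s : ℝ => g (x + s • Pi.single (Fin.last n) 1))
      (L (Pi.single (Fin.last n) 1)) (Icc (α - x (Fin.last n)) (β - x (Fin.last n))) 0 :=
  hasDerivWithinAt_line (by simpa using h) fun _ hs => line_mem_closed_base hx hs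

lemma uniqueDiffWithinAt_normal_line (hab : α < β) {y : ℝ} (hy : y ∈ Icc α β) :
    UniqueDiffWithinAt ℝ (Icc (α - y) (β - y)) 0 :=
  uniqueDiffOn_Icc (by linarith) 0 ⟨by linarith [hy.1], by linarith [hy.2]⟩

end NormalDerivative

/-- Estimate 3, right extreme subdomain: with the additional Dirichlet
condition `ε(·,b_I,·) = 0` and the sign condition
`4p + 2bₙ/aₙₙ + φ'(b_I)/φ(b_I) < 0`, the weighted squared normal derivative
`ν² φ(xₙ) ϕ(t)`, `ν = ∂ₙε`, attains its maximum on the face `xₙ = a_I` only. -/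
theorem estimate_3_right_extreme_subdomain
    {n : ℕ} (T p ν₀ : ℝ) (hT : 0 < T) (hν₀ : 0 < ν₀)
    (a : Fin (n+1) → Fin (n+1) → ℝ → ℝ) (b : Fin (n+1) → ℝ → ℝ) (c : ℝ → ℝ)
    (ha_symm : ∀ i j t, a i j t = a j i t)
    (ha_smooth : ∀ i j, ContDiff ℝ (⊤ : ℕ∞) (a i j))
    (ha_bdd : ∀ i j, ∃ C, ∀ t, |a i j t| ≤ C)
    (hb_smooth : ∀ i, ContDiff ℝ (⊤ : ℕ∞) (b i))
    (hb_bdd : ∀ i, ∃ C, ∀ t, |b i t| ≤ C)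
    (hc_smooth : ContDiff ℝ (⊤ : ℕ∞) c)
    (hc_bdd : ∃ C, ∀ t, |c t| ≤ C)
    (hell : ∀ t ∈ Ioo (0:ℝ) T, ∀ ξ : Fin (n+1) → ℝ,
      ν₀ * ∑ i, ξ i ^ 2 ≤ ∑ i, ∑ j, a i j t * ξ i * ξ j)
    (D : Set (Fin n → ℝ)) (hD_open : IsOpen D) (hD_bdd : Bornology.IsBounded D)
    (aI bI : ℝ) (hab : aI < bI)
    (ΩI : Set (Fin (n+1) → ℝ))
    (hΩI : ΩI = {x : Fin (n+1) → ℝ | Fin.init x ∈ D ∧ x (Fin.last n) ∈ Ioo aI bI})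
    (ε : (Fin (n+1) → ℝ) → ℝ → ℝ)
    (hε_smooth : ContDiffOn ℝ (⊤ : ℕ∞)
      (fun q : (Fin (n+1) → ℝ) × ℝ => ε q.1 q.2) (closure ΩI ×ˢ Icc 0 T))
    (hε_pde : ∀ x ∈ ΩI, ∀ t ∈ Ioo (0:ℝ) T, transOp p a b c ε x t = 0)
    (hε_lat : ∀ X ∈ frontier D, ∀ xn ∈ Icc aI bI, ∀ t ∈ Icc (0:ℝ) T,
      ε (Fin.snoc X xn) t = 0)
    (hε_ic : ∀ x ∈ ΩI, ε x 0 = 0)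
    (hε_right : ∀ X ∈ D, ∀ t ∈ Ioo (0:ℝ) T, ε (Fin.snoc X bI) t = 0)
    (ν : (Fin (n+1) → ℝ) → ℝ → ℝ)
    (hν : ∀ x t, ν x t =
      fderivWithin ℝ (fun y => ε y t) (closure ΩI) x (Pi.single (Fin.last n) 1))
    (φ : ℝ → ℝ) (hφ : ContDiff ℝ 2 φ) (hφ_pos : ∀ x, 0 < φ x)
    (hφ1 : ∃ C, ∀ x, |deriv φ x / φ x| ≤ C)
    (hφ2 : ∃ C, ∀ x, |deriv (deriv φ) x / φ x| ≤ C)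
    (hφ_sign : ∀ t ∈ Icc (0:ℝ) T,
      4 * p + 2 * b (Fin.last n) t / a (Fin.last n) (Fin.last n) t
        + deriv φ bI / φ bI < 0)
    (Γ : ℝ)
    (hΓ : Γ = (⨆ t, |a (Fin.last n) (Fin.last n) t|) *
            (⨆ x, |deriv (deriv φ) x / φ x|)
          + 2 * (⨆ t, |a (Fin.last n) (Fin.last n) t|) * (⨆ x, |deriv φ x / φ x|) ^ 2
          + 2 * (⨆ t, |c t - p * b (Fin.last n) t
                        - p ^ 2 * a (Fin.last n) (Fin.last n) t|)
          + (⨆ t, |2 * p * a (Fin.last n) (Fin.last n) t + b (Fin.last n) t|) *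
            (⨆ x, |deriv φ x / φ x|))
    (ϕ : ℝ → ℝ) (hϕ : ContDiff ℝ 1 ϕ)
    (hϕ_pos : ∀ t ∈ Icc (0:ℝ) T, 0 < ϕ t)
    (hϕ_decay : ∀ t ∈ Icc (0:ℝ) T, deriv ϕ t / ϕ t ≤ -Γ) :
    ∀ X ∈ closure D, ∀ xn ∈ Icc aI bI, ∀ t ∈ Icc (0:ℝ) T,
      ν (Fin.snoc X xn) t ^ 2 * φ xn * ϕ t ≤
        sSup {y : ℝ | ∃ X' ∈ closure D, ∃ s ∈ Icc (0:ℝ) T,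
          y = ν (Fin.snoc X' aI) s ^ 2 * φ aI * ϕ s} := by

  set C : Set (Fin (n+1) → ℝ) :=
    {x | Fin.init x ∈ closure D ∧ x (Fin.last n) ∈ Icc aI bI} with hCdef
  have hC : closure ΩI = C := by rw [hΩI]; exact closure_cylinder_base hab
  rw [hC] at hε_smooth
  simp only [hC] at hν
  set F : (Fin (n+1) → ℝ) × ℝ → ℝ := fun q => ε q.1 q.2 with hF
  set S := rightClosedCylinder D aI bI T with hSdef
  have hS : UniqueDiffOn ℝ S := uniqueDiffOn_rightClosedCylinder hD_open
  have hcl : S ⊆ closure (interior S) := rightClosedCylinder_subset_closure_interior hD_open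
  have hSK : S ⊆ C ×ˢ Icc 0 T := fun q hq =>
    ⟨⟨subset_closure hq.1, Ioc_subset_Icc_self hq.2.1⟩, Ioo_subset_Icc_self hq.2.2⟩
  have hFS : ContDiffOn ℝ ∞ F S := hε_smooth.mono hSK
  have hline : ∀ (L : (Fin (n+1) → ℝ) × ℝ →L[ℝ] ℝ), ∀ x ∈ C, ∀ t ∈ Icc 0 T,
      HasFDerivWithinAt F L (C ×ˢ Icc 0 T) (x, t) →
      HasFDerivWithinAt (fun y => ε y t)
        (L.comp (ContinuousLinearMap.inl ℝ (Fin (n+1) → ℝ) ℝ)) C x := by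
    intro L x hx t ht h
    exact HasFDerivWithinAt.comp (f := fun y => (y, t)) x h
      (hasFDerivAt_prodMk_left x t).hasFDerivWithinAt (fun y hy => ⟨hy, ht⟩)
  have hν_line : ∀ x ∈ C, ∀ t ∈ Icc 0 T,
      HasDerivWithinAt (fun s : ℝ => ε (x + s • Pi.single (Fin.last n) 1) t) (ν x t)
        (Icc (aI - x (Fin.last n)) (bI - x (Fin.last n))) 0 := by
    intro x hx t ht
    rw [hν]
    exact hasDerivWithinAt_normal_line (g := fun y => ε y t) hx.1
      (hline _ x hx t ht (hε_smooth.hasFDerivWithinAt_top ⟨hx, ht⟩)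
        ).differentiableWithinAt.hasFDerivWithinAt
  have hν_unique : ∀ x ∈ C, ∀ t ∈ Icc 0 T, ∀ d : ℝ,
      HasDerivWithinAt (fun s : ℝ => ε (x + s • Pi.single (Fin.last n) 1) t) d
        (Icc (aI - x (Fin.last n)) (bI - x (Fin.last n))) 0 → ν x t = d :=
    fun x hx t ht d hd =>
      (uniqueDiffWithinAt_normal_line hab hx.2).eq_deriv _ (hν_line x hx t ht) hd
  have hν_cont : ContinuousOn (fun q : (Fin (n+1) → ℝ) × ℝ => ν q.1 q.2) (C ×ˢ Icc 0 T) := by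
    intro q hq
    have h1 : ContDiffWithinAt ℝ (0 + 1) F (C ×ˢ Icc 0 T) q :=
      (hε_smooth q hq).of_le (by simp)
    obtain ⟨v, hv, -, -, f', hf', hf'c⟩ :=
      (contDiffWithinAt_succ_iff_hasFDerivWithinAt' (by simp)).1 h1
    rw [insert_eq_of_mem hq] at hv
    have heq : ∀ y ∈ v ∩ C ×ˢ Icc 0 T, ν y.1 y.2 = f' y (spaceDir (Fin.last n)) := by
      rintro ⟨x, t⟩ ⟨hyv, hx, ht⟩
      refine hν_unique x hx t ht _ ?_
      have := hasDerivWithinAt_normal_line hx.1 (hline _ x hx t ht (hf' _ hyv))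
      simpa using this
    have hc : ContinuousWithinAt (fun y => f' y (spaceDir (Fin.last n))) (C ×ˢ Icc 0 T) q :=
      hf'c.continuousWithinAt.clm_apply continuousWithinAt_const
    refine hc.congr_of_eventuallyEq ?_ (heq q ⟨mem_of_mem_nhdsWithin hq hv, hq⟩)
    filter_upwards [hv, self_mem_nhdsWithin] with y hy1 hy2 using heq y ⟨hy1, hy2⟩
  have hν_zero : ∀ x ∈ C, ∀ t ∈ Icc 0 T,
      (∀ s ∈ Icc (aI - x (Fin.last n)) (bI - x (Fin.last n)),
        ε (x + s • Pi.single (Fin.last n) 1) t = 0) → ν x t = 0 := by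
    intro x hx t ht h0
    exact hν_unique x hx t ht 0 ((hasDerivWithinAt_const (0 : ℝ) _ (0 : ℝ)).congr_of_mem h0
      ⟨by linarith [hx.2.1], by linarith [hx.2.2]⟩)
  have hν_S : ∀ q ∈ S, ν q.1 q.2 = dirDeriv S (spaceDir (Fin.last n)) F q := by
    rintro ⟨x, t⟩ hq
    have hJ : Ioc (aI - x (Fin.last n)) (bI - x (Fin.last n)) ⊆
      Icc (aI - x (Fin.last n)) (bI - x (Fin.last n)) := Ioc_subset_Icc_self
    have h1 := (hν_line x (hSK hq).1 t (hSK hq).2).mono hJ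
    have h2 := hasDerivWithinAt_line (f := F) (S := S) (q := (x, t))
      (v := spaceDir (Fin.last n)) (r := 0) (L := fderivWithin ℝ F S (x, t))
      (J := Ioc (aI - x (Fin.last n)) (bI - x (Fin.last n)))
      (by simpa using hFS.hasFDerivWithinAt_top hq) (by
        intro s hs
        have := line_mem_closed_base (α := aI) (β := bI) hq.1 (hJ hs)
        refine ⟨by simpa using this.1, ⟨?_, by simpa using this.2.2⟩, by simpa using hq.2.2⟩
        have := hs.1
        simp
        linarith)
    have hU : UniqueDiffWithinAt ℝ (Ioc (aI - x (Fin.last n)) (bI - x (Fin.last n))) 0 :=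
      uniqueDiffOn_Ioc _ _ 0 ⟨by linarith [hq.2.1.1], by linarith [hq.2.1.2]⟩
    exact hU.eq_deriv _ h1 (by simpa [hF, dirDeriv] using h2)
  have hpde : ∀ q ∈ S, parabolicWithin S a
      (fun i t => 2 * p * a i (Fin.last n) t + b i t)
      (fun t => c t - p * b (Fin.last n) t - p ^ 2 * a (Fin.last n) (Fin.last n) t) F q = 0 := by
    have hac := fun i j => (ha_smooth i j).continuous
    have hbc := fun i => (hb_smooth i).continuous
    have hcc := hc_smooth.continuous
    refine Set.EqOn.of_subset_closure (s := openCylinder D aI bI T) ?_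
      (continuousOn_parabolicWithin hS hFS hac (fun i => by fun_prop) (by fun_prop))
      continuousOn_const openCylinder_subset rightClosedCylinder_subset_closure
    rintro ⟨x, t⟩ hq
    have := transOp_eq_parabolicWithin hS p a b c hFS
      (rightClosedCylinder_mem_nhds hD_open hq)
    rw [← hF] at this
    rw [← this]
    exact hε_pde x (by rw [hΩI]; exact ⟨hq.1, hq.2.1⟩) t hq.2.2
  set u := dirDeriv S (spaceDir (Fin.last n)) F with hu
  have hu_smooth : ContDiffOn ℝ ∞ u S := hFS.dirDeriv hS _
  have hε_init : ∀ x ∈ C, ε x 0 = 0 := by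
    have hcont : ContinuousOn (fun x => ε x 0) C :=
      hε_smooth.continuousOn.comp (f := fun x => (x, (0 : ℝ))) (by fun_prop)
        fun x hx => ⟨hx, le_rfl, hT.le⟩
    exact Set.EqOn.of_subset_closure (s := ΩI) (g := fun _ => 0) hε_ic hcont continuousOn_const
      (hC ▸ subset_closure) hC.ge
  have hlat : ∀ x ∈ C, Fin.init x ∉ D → ∀ t ∈ Icc 0 T, ν x t = 0 := by
    intro x hx hxD t ht
    refine hν_zero x hx t ht fun s hs => ?_
    have hmem := line_mem_closed_base (α := aI) (β := bI) (D := frontier D)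
      (by rw [hD_open.frontier_eq]; exact ⟨hx.1, hxD⟩) hs
    have := hε_lat _ hmem.1 _ hmem.2 t ht
    rwa [Fin.snoc_init_self] at this
  have hinit : ∀ x ∈ C, ν x 0 = 0 := fun x hx =>
    hν_zero x hx 0 ⟨le_rfl, hT.le⟩ fun s hs => hε_init _ (line_mem_closed_base hx.1 hs)
  have hface : ∀ q ∈ S, q.1 (Fin.last n) = bI → F q = 0 := by
    rintro ⟨x, t⟩ hq hqb
    have := hε_right _ hq.1 t hq.2.2
    simp only at hqb
    rwa [← hqb, Fin.snoc_init_self] at this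
  set W : (Fin (n+1) → ℝ) × ℝ → ℝ := fun q => ν q.1 q.2 ^ 2 * φ (q.1 (Fin.last n)) * ϕ q.2 with hW
  have hφc := hφ.continuous
  have hϕc := hϕ.continuous
  have hW_cont : ContinuousOn W (C ×ˢ Icc 0 T) :=
    ((hν_cont.pow 2).mul (by fun_prop)).mul (by fun_prop)
  have hC_compact : IsCompact C := by
    have hc : Continuous fun r : (Fin n → ℝ) × ℝ =>
        (Fin.snoc (α := fun _ => ℝ) r.1 r.2 : Fin (n + 1) → ℝ) :=
      Continuous.finSnoc (A := fun _ => ℝ) continuous_fst continuous_snd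
    refine ((hD_bdd.isCompact_closure.prod (isCompact_Icc (a := aI) (b := bI))).image hc
      ).of_isClosed_subset (hC ▸ isClosed_closure) fun x hx => ?_
    exact ⟨(Fin.init x, x (Fin.last n)), hx, by simp⟩
  have hK_compact : IsCompact (C ×ˢ Icc 0 T) := hC_compact.prod isCompact_Icc
  intro X hX xn hxn
  set M := sSup {y : ℝ | ∃ X' ∈ closure D, ∃ s ∈ Icc (0:ℝ) T,
          y = ν (Fin.snoc X' aI) s ^ 2 * φ aI * ϕ s} with hM
  have hsnoc : ∀ X' ∈ closure D, ∀ y ∈ Icc aI bI,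
      (Fin.snoc (α := fun _ => ℝ) X' y : Fin (n+1) → ℝ) ∈ C :=
    fun X' hX' y hy => ⟨by simpa using hX', by simpa using hy⟩
  have hMle : ∀ x ∈ C, x (Fin.last n) = aI → ∀ t ∈ Icc 0 T, W (x, t) ≤ M := by
    intro x hx hxa t ht
    refine le_csSup ?_ ⟨Fin.init x, hx.1, t, ht, ?_⟩
    · refine (hK_compact.bddAbove_image hW_cont).mono ?_
      rintro y ⟨X', hX', s, hs, rfl⟩
      exact ⟨(Fin.snoc (α := fun _ => ℝ) X' aI, s), ⟨hsnoc X' hX' aI ⟨le_rfl, hab.le⟩, hs⟩,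
        by simp [hW]⟩
    · simp only [hW]
      rw [← hxa, Fin.snoc_init_self]
  have hM0 : 0 ≤ M := by
    refine Real.sSup_nonneg ?_
    rintro y ⟨X', hX', s, hs, rfl⟩
    exact mul_nonneg (mul_nonneg (sq_nonneg _) (hφ_pos _).le) (hϕ_pos s hs).le
  have hΓ_le : ∀ (y t : ℝ), 2 * a (Fin.last n) (Fin.last n) t * (deriv φ y / φ y) ^ 2
      - a (Fin.last n) (Fin.last n) t * (deriv (deriv φ) y / φ y)
      + (2 * p * a (Fin.last n) (Fin.last n) t + b (Fin.last n) t) * (deriv φ y / φ y)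
      - 2 * (c t - p * b (Fin.last n) t - p ^ 2 * a (Fin.last n) (Fin.last n) t) ≤ Γ := by
    intro y t
    obtain ⟨Ca, hCa⟩ := ha_bdd (Fin.last n) (Fin.last n)
    obtain ⟨Cb, hCb⟩ := hb_bdd (Fin.last n)
    obtain ⟨Cc, hCc⟩ := hc_bdd
    obtain ⟨C1, hC1⟩ := hφ1
    obtain ⟨C2, hC2⟩ := hφ2
    rw [hΓ]
    refine zeroth_order_coeff_le
      (le_ciSup (f := fun t => |a (Fin.last n) (Fin.last n) t|) ⟨Ca, ?_⟩ t)
      (le_ciSup (f := fun x => |deriv φ x / φ x|) ⟨C1, ?_⟩ y)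
      (le_ciSup (f := fun x => |deriv (deriv φ) x / φ x|) ⟨C2, ?_⟩ y)
      (le_ciSup (f := fun t => |2 * p * a (Fin.last n) (Fin.last n) t + b (Fin.last n) t|)
        ⟨|2 * p| * Ca + Cb, ?_⟩ t)
      (le_ciSup (f := fun t => |c t - p * b (Fin.last n) t
        - p ^ 2 * a (Fin.last n) (Fin.last n) t|) ⟨Cc + |p| * Cb + |p ^ 2| * Ca, ?_⟩ t)
    · rintro _ ⟨s, rfl⟩
      exact hCa s
    · rintro _ ⟨s, rfl⟩
      exact hC1 s
    · rintro _ ⟨s, rfl⟩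
      exact hC2 s
    · rintro _ ⟨s, rfl⟩
      refine (abs_add_le _ _).trans (add_le_add ?_ (hCb s))
      rw [abs_mul]
      exact mul_le_mul_of_nonneg_left (hCa s) (abs_nonneg _)
    · rintro _ ⟨s, rfl⟩
      refine (abs_sub _ _).trans (add_le_add ((abs_sub _ _).trans (add_le_add (hCc s) ?_)) ?_)
      · rw [abs_mul]
        exact mul_le_mul_of_nonneg_left (hCb s) (abs_nonneg _)
      · rw [abs_mul]
        exact mul_le_mul_of_nonneg_left (hCa s) (abs_nonneg _)
  have hell_nonneg : ∀ t ∈ Ioo (0:ℝ) T, ∀ ξ : Fin (n+1) → ℝ,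
      0 ≤ ∑ i, ∑ j, a i j t * ξ i * ξ j := fun t ht ξ =>
    le_trans (mul_nonneg hν₀.le (Finset.sum_nonneg fun i _ => sq_nonneg _)) (hell t ht ξ)
  have ha_pos : ∀ t ∈ Ioo (0:ℝ) T, 0 < a (Fin.last n) (Fin.last n) t := by
    intro t ht
    have := hell t ht (Pi.single (Fin.last n) 1)
    simp [Pi.single_apply] at this
    linarith
  have main : ∀ t' ∈ Ioo 0 T, ∀ η > 0, ∀ x ∈ C, W (x, t') - η * t' ≤ M := by
    intro t' ht' η hη x hx
    have hsub : C ×ˢ Icc 0 t' ⊆ C ×ˢ Icc 0 T :=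
      prod_mono_right (Icc_subset_Icc_right ht'.2.le)
    obtain ⟨q, ⟨hqC, hqt⟩, hqmax⟩ := (hC_compact.prod (isCompact_Icc (a := 0) (b := t'))
      ).exists_isMaxOn ⟨(x, t'), hx, ht'.1.le, le_rfl⟩
      (f := fun q => W q - η * q.2) ((hW_cont.mono hsub).sub (by fun_prop))
    refine (hqmax (show (x, t') ∈ C ×ˢ Icc 0 t' from ⟨hx, ht'.1.le, le_rfl⟩)).trans ?_
    have hqT : q.2 ∈ Icc 0 T := ⟨hqt.1, hqt.2.trans ht'.2.le⟩
    have hηq : 0 ≤ η * q.2 := mul_nonneg hη.le hqt.1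
    suffices h : W q ≤ M by simp only; linarith
    have hzero : ν q.1 q.2 = 0 → W q ≤ M := fun h => by simpa [hW, h] using hM0
    by_cases hq0 : q.2 = 0
    · exact hzero (by rw [hq0]; exact hinit _ hqC)
    by_cases hqD : Fin.init q.1 ∉ D
    · exact hzero (hlat _ hqC hqD _ hqT)
    by_cases hqa : q.1 (Fin.last n) = aI
    · exact hMle q.1 hqC hqa q.2 hqT
    have hqt' : q.2 ∈ Ioo 0 T := ⟨lt_of_le_of_ne hqt.1 (Ne.symm hq0), hqt.2.trans_lt ht'.2⟩
    have hqS : q ∈ S :=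
      ⟨not_not.1 hqD, ⟨lt_of_le_of_ne hqC.2.1 (Ne.symm hqa), hqC.2.2⟩, hqt'⟩
    have hϕq := hϕ_pos _ hqT
    have hmaxS : ∀ y ∈ S, y.2 ≤ q.2 →
        u y ^ 2 * φ (y.1 (Fin.last n)) * ϕ y.2 - η * y.2 ≤
        u q ^ 2 * φ (q.1 (Fin.last n)) * ϕ q.2 - η * q.2 := by
      intro y hy hyq
      rw [← hν_S y hy, ← hν_S q hqS]
      exact hqmax (show y ∈ C ×ˢ Icc 0 t' from
        ⟨(hSK hy).1, (hSK hy).2.1, hyq.trans hqt.2⟩)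
    by_cases hqb : q.1 (Fin.last n) = bI
    · refine hzero ?_
      rw [hν_S q hqS]
      refine normal_deriv_eq_zero_of_face_max hD_open hSdef hFS hface hqS hqb (hpde q hqS)
        (ha_pos _ hqt') hφ hφ_pos ?_ fun y hy hyq => ?_
      · have hne := (ha_pos _ hqt').ne'
        convert hφ_sign q.2 hqT using 2
        field_simp
        ring
      · have := hmaxS y hy hyq.le
        rw [hyq] at this
        exact le_of_mul_le_mul_right (by linarith) hϕq
    · have hqU : q ∈ openCylinder D aI bI T :=
        ⟨hqS.1, ⟨hqS.2.1.1, lt_of_le_of_ne hqC.2.2 hqb⟩, hqt'⟩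
      have hev := (isOpen_openCylinder hD_open).mem_nhds hqU
      exact (not_interior_max hD_open hSdef hu_smooth hqU
        (parabolicWithin_dirDeriv_eq_zero hS hcl hFS (rightClosedCylinder_mem_nhds hD_open hqU)
          (mem_of_superset hev fun y hy => hpde y (openCylinder_subset hy)) _)
        (fun i j => ha_symm i j _) (hell_nonneg _ hqt') hφ hφ_pos hϕ hϕq hη
        (hϕ_decay _ hqT) (hΓ_le _ _) hmaxS).elim
  have hx := hsnoc X hX xn hxn
  have hopen : ∀ t ∈ Ioo 0 T, W (Fin.snoc X xn, t) ≤ M := by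
    intro t ht
    refine le_of_forall_pos_le_add fun δ hδ => ?_
    have := main t ht (δ / t) (div_pos hδ ht.1) _ hx
    rw [div_mul_cancel₀ _ ht.1.ne'] at this
    linarith
  intro t ht
  have hcont : ContinuousOn (fun t => W (Fin.snoc X xn, t)) (Icc 0 T) :=
    hW_cont.comp (by fun_prop) fun t ht => ⟨hx, ht⟩
  have hfin : W (Fin.snoc X xn, t) ≤ M := by
    rw [← closure_Ioo hT.ne] at ht hcont
    exact ((hcont t ht).mono subset_closure).closure_le ht continuousWithinAt_const hopen
  simpa [hW] using hfin
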